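/- arXiv:2108.01492 — 7 statements merged into one kernel-verified Lean document; each statement's English description precedes it below -/
import Mathlib

section
/- Let S, R, T be commutative monoids and suppose S is T-dual to R with duality function ψ : S × R → T. Then S and R are both T-reflexive. -/
/-- `S` is `T`-dual to `R` with duality function `ψ`. -/
def IsDuality {S R T : Type*} [AddCommMonoid S] [AddCommMonoid R] [AddCommMonoid T]
    (ψ : S → R → T) : Prop :=
  (∀ x₁ x₂ : S, (∀ y, ψ x₁ y = ψ x₂ y) → x₁ = x₂) ∧
  (∀ h : S → T, ((h 0 = 0 ∧ ∀ a b, h (a + b) = h a + h b) ↔ ∃ y, ∀ x, h x = ψ x y)) ∧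
  (∀ y₁ y₂ : R, (∀ x, ψ x y₁ = ψ x y₂) → y₁ = y₂) ∧
  (∀ g : R → T, ((g 0 = 0 ∧ ∀ a b, g (a + b) = g a + g b) ↔ ∃ x, ∀ y, g y = ψ x y))

/-- The canonical map `L : S → S'' = Hom(Hom(S,T),T)`, `L_x(h) := h(x)`. -/
def evalHom {S T : Type*} [AddCommMonoid S] [AddCommMonoid T] (x : S) :
    (S →+ T) →+ T where
  toFun h := h x
  map_zero' := rfl
  map_add' _ _ := rfl

/-- `S` is `T`-reflexive: `x ↦ L_x` is a bijection from `S` onto `S''`. -/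
def IsReflexive (S T : Type*) [AddCommMonoid S] [AddCommMonoid T] : Prop :=
  Function.Bijective (fun x : S => evalHom (T := T) x)

theorem refl_aux {S R T : Type*}
    [AddCommMonoid S] [AddCommMonoid R] [AddCommMonoid T]
    (ψ : S → R → T) (hψ : IsDuality ψ) : IsReflexive S T := by
  obtain ⟨h1, h2, h3, h4⟩ := hψ
  have hS : ∀ y, ψ 0 y = 0 ∧ ∀ a b, ψ (a + b) y = ψ a y + ψ b y :=
    fun y => (h2 (fun x => ψ x y)).2 ⟨y, fun _ => rfl⟩
  have hR : ∀ x, ψ x 0 = 0 ∧ ∀ a b, ψ x (a + b) = ψ x a + ψ x b :=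
    fun x => (h4 (fun y => ψ x y)).2 ⟨x, fun _ => rfl⟩
  let F : R → (S →+ T) := fun y =>
    { toFun := fun x => ψ x y, map_zero' := (hS y).1, map_add' := (hS y).2 }
  constructor
  · intro a b hab
    exact h1 a b fun y => DFunLike.congr_fun hab (F y)
  · intro Φ
    have F0 : F 0 = 0 := by ext x; exact (hR x).1
    have Fa : ∀ a b, F (a + b) = F a + F b := by
      intro a b; ext x; exact (hR x).2 a b
    obtain ⟨x, hx⟩ := (h4 (fun y => Φ (F y))).1
      ⟨by simp only [F0, map_zero], fun a b => by simp only [Fa, map_add]⟩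
    refine ⟨x, ?_⟩
    ext h
    obtain ⟨y, hy⟩ := (h2 h).1 ⟨map_zero h, map_add h⟩
    have e : h = F y := by ext z; exact hy z
    subst e
    exact (hx y).symm

/-- If `S` is `T`-dual to `R` with duality function `ψ`, then `S` and `R` are both
`T`-reflexive. -/
theorem duality_implies_reflexive {S R T : Type*}
    [AddCommMonoid S] [AddCommMonoid R] [AddCommMonoid T]
    (ψ : S → R → T) (hψ : IsDuality ψ) :
    IsReflexive S T ∧ IsReflexive R T := by
  refine ⟨refl_aux ψ hψ, refl_aux (fun y x => ψ x y) ?_⟩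
  obtain ⟨h1, h2, h3, h4⟩ := hψ
  exact ⟨h3, h4, h1, h2⟩
end

section
/- Let S, R, T be commutative monoids such that S is T-dual to R with duality function ψ. Then a map m : S → S has a dual map n : R → R with respect to ψ if and only if m is a monoid homomorphism from S to S. Moreover, the dual map, if it exists, is unique and is itself a monoid homomorphism from R to R. -/
/-- Let `S, R, T` be commutative monoids such that `S` is `T`-dual to `R` with duality
function `ψ`.  A map `m : S → S` has a dual map `n : R → R` with respect to `ψ`
(meaning `ψ(m(x),y) = ψ(x,n(y))` for all `x, y`) if and only if `m` is a monoid
homomorphism from `S` to `S`.  Moreover, the dual map, if it exists, is unique and is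
itself a monoid homomorphism from `R` to `R`. -/
theorem maps_having_a_dual {S R T : Type*}
    [AddCommMonoid S] [AddCommMonoid R] [AddCommMonoid T]
    (ψ : S → R → T) (hψ : IsDuality ψ) (m : S → S) :
    ((∃ n : R → R, ∀ x y, ψ (m x) y = ψ x (n y)) ↔
      (m 0 = 0 ∧ ∀ a b, m (a + b) = m a + m b)) ∧
    (∀ n₁ n₂ : R → R, (∀ x y, ψ (m x) y = ψ x (n₁ y)) →
      (∀ x y, ψ (m x) y = ψ x (n₂ y)) → n₁ = n₂) ∧
    (∀ n : R → R, (∀ x y, ψ (m x) y = ψ x (n y)) →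
      (n 0 = 0 ∧ ∀ a b, n (a + b) = n a + n b)) := by
  obtain ⟨h1, h2, h3, h4⟩ := hψ
  have A : ∀ y, ψ 0 y = 0 ∧ ∀ a b, ψ (a + b) y = ψ a y + ψ b y :=
    fun y => (h2 (fun x => ψ x y)).2 ⟨y, fun _ => rfl⟩
  have B : ∀ x, ψ x 0 = 0 ∧ ∀ a b, ψ x (a + b) = ψ x a + ψ x b :=
    fun x => (h4 (fun y => ψ x y)).2 ⟨x, fun _ => rfl⟩
  refine ⟨⟨?_, ?_⟩, ?_, ?_⟩
  · rintro ⟨n, hn⟩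
    refine ⟨h1 _ _ fun y => ?_, fun a b => h1 _ _ fun y => ?_⟩
    · rw [hn, (A _).1, (A _).1]
    · rw [hn, (A _).2, (A _).2, hn, hn]
  · rintro ⟨m0, ma⟩
    have key : ∀ y, ∃ z, ∀ x, ψ (m x) y = ψ x z := fun y =>
      (h2 (fun x => ψ (m x) y)).1
        ⟨by simp only [m0, (A y).1], fun a b => by simp only [ma, (A y).2]⟩
    choose n hn using key
    exact ⟨n, fun x y => hn y x⟩
  · intro n₁ n₂ e₁ e₂
    funext y
    exact h3 _ _ fun x => by rw [← e₁, e₂]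
  · intro n hn
    refine ⟨h3 _ _ fun x => ?_, fun a b => h3 _ _ fun x => ?_⟩
    · rw [← hn, (B _).1, (B _).1]
    · rw [← hn, (B _).2, (B _).2, hn, hn]
end

section
/- Let I be a finite index set, let (S_i)_{i∈I}, (R_i)_{i∈I} and T be commutative monoids, and assume that for each i ∈ I, S_i is T-dual to R_i with duality function ψ_i. Then Π_{i∈I} S_i is T-dual to Π_{i∈I} R_i with duality function Ψ(x,y) := Σ_{i∈I} ψ_i(x_i,y_i). -/
open Finset

theorem half_dual {I : Type*} [Fintype I]
    {S R : I → Type*} {T : Type*}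
    [∀ i, AddCommMonoid (S i)] [∀ i, AddCommMonoid (R i)] [AddCommMonoid T]
    (ψ : ∀ i, S i → R i → T)
    (inj : ∀ i, ∀ x₁ x₂ : S i, (∀ y, ψ i x₁ y = ψ i x₂ y) → x₁ = x₂)
    (hom : ∀ i, ∀ h : S i → T, ((h 0 = 0 ∧ ∀ a b, h (a + b) = h a + h b) ↔
      ∃ y, ∀ x, h x = ψ i x y))
    (z : ∀ i x, ψ i x 0 = 0) :
    (∀ x₁ x₂ : ∀ i, S i, (∀ y : ∀ i, R i, ∑ i, ψ i (x₁ i) (y i) = ∑ i, ψ i (x₂ i) (y i)) →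
      x₁ = x₂) ∧
    (∀ h : (∀ i, S i) → T, ((h 0 = 0 ∧ ∀ a b, h (a + b) = h a + h b) ↔
      ∃ y : ∀ i, R i, ∀ x, h x = ∑ i, ψ i (x i) (y i))) := by
  classical
  have key : ∀ (x : ∀ i, S i) (i : I) (y : R i),
      ∑ j, ψ j (x j) ((Pi.single i y : ∀ i, R i) j) = ψ i (x i) y := by
    intro x i y
    rw [Finset.sum_eq_single i]
    · simp
    · intro j _ hj
      rw [Pi.single_eq_of_ne hj, z]
    · simp
  refine ⟨fun x₁ x₂ h => ?_, fun h => ⟨fun hh => ?_, ?_⟩⟩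
  · funext i
    apply inj i
    intro y
    rw [← key, ← key, h]
  · obtain ⟨h0, ha⟩ := hh
    have : ∀ i, ∃ y, ∀ x : S i, h (Pi.single i x) = ψ i x y := fun i =>
      (hom i (fun x => h (Pi.single i x))).1
        ⟨by simp [h0], fun a b => by simp only [Pi.single_add, ha]⟩
    choose y hy using this
    refine ⟨y, fun x => ?_⟩
    let H : (∀ i, S i) →+ T := ⟨⟨h, h0⟩, ha⟩
    have e : H (∑ i, Pi.single i (x i)) = ∑ i, H (Pi.single i (x i)) := map_sum _ _ _
    rw [Finset.univ_sum_single] at e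
    exact e.trans (Finset.sum_congr rfl fun i _ => hy i (x i))
  · rintro ⟨y, hy⟩
    have hb := fun i => (hom i (fun x => ψ i x (y i))).2 ⟨y i, fun _ => rfl⟩
    refine ⟨?_, fun a b => ?_⟩
    · rw [hy]
      exact Finset.sum_eq_zero fun i _ => (hb i).1
    · rw [hy, hy, hy, ← Finset.sum_add_distrib]
      exact Finset.sum_congr rfl fun i _ => (hb i).2 _ _

/-- Let `I` be a finite index set and assume that `S i` is `T`-dual to `R i` with
duality function `ψ i` for each `i`.  Then `Π i, S i` is `T`-dual to `Π i, R i` with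
duality function `Ψ(x,y) := ∑ i, ψ i (x i) (y i)`. -/
theorem duality_of_product_spaces {I : Type*} [Fintype I]
    {S R : I → Type*} {T : Type*}
    [∀ i, AddCommMonoid (S i)] [∀ i, AddCommMonoid (R i)] [AddCommMonoid T]
    (ψ : ∀ i, S i → R i → T) (hψ : ∀ i, IsDuality (ψ i)) :
    IsDuality (fun (x : ∀ i, S i) (y : ∀ i, R i) => ∑ i, ψ i (x i) (y i)) := by
  have z1 : ∀ i x, ψ i x 0 = 0 := fun i x =>
    (((hψ i).2.2.2 (fun y => ψ i x y)).2 ⟨x, fun _ => rfl⟩).1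
  have z2 : ∀ i y, ψ i 0 y = 0 := fun i y =>
    (((hψ i).2.1 (fun x => ψ i x y)).2 ⟨y, fun _ => rfl⟩).1
  have A := half_dual ψ (fun i => (hψ i).1) (fun i => (hψ i).2.1) z1
  have B := half_dual (fun i y x => ψ i x y) (fun i => (hψ i).2.2.1)
    (fun i => (hψ i).2.2.2) (fun i y => z2 i y)
  exact ⟨A.1, A.2, B.1, B.2⟩
end

section
/- Let (S,+,·) be a commutative semiring in which the multiplicative unit 1 generates the additive monoid (S,+), i.e., every x ∈ S with x ≠ 0 is a finite sum 1 + ⋯ + 1 of n ≥ 1 copies of 1. Then the commutative monoid (S,+) is (S,+)-dual to (S,+) with duality function ψ(x,y) := x·y. -/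
/-- Let `(S,+,·)` be a commutative semiring in which the multiplicative unit `1`
generates the additive monoid `(S,+)`, i.e. every nonzero `x ∈ S` is a sum of `n ≥ 1`
copies of `1`.  Then the commutative monoid `(S,+)` is `(S,+)`-dual to `(S,+)` with
duality function `ψ(x,y) := x * y`. -/
theorem semiring_generated_by_one_duality {S : Type*} [CommSemiring S]
    (hgen : ∀ x : S, x ≠ 0 → ∃ n : ℕ, 1 ≤ n ∧ x = n • (1 : S)) :
    IsDuality (fun x y : S => x * y) := by
  have key : ∀ h : S → S, h 0 = 0 → (∀ a b, h (a + b) = h a + h b) →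
      ∀ x, h x = x * h 1 := by
    intro h h0 hadd x
    have hn : ∀ n : ℕ, h (n • (1 : S)) = (n • (1 : S)) * h 1 := by
      intro n
      induction n with
      | zero => simp [h0]
      | succ k ih => rw [succ_nsmul, hadd, ih, add_mul, one_mul]
    by_cases hx : x = 0
    · rw [hx, h0, zero_mul]
    · obtain ⟨n, _, rfl⟩ := hgen x hx
      exact hn n
  refine ⟨?_, ?_, ?_, ?_⟩
  · intro a b h
    simpa using h 1
  · intro h
    constructor
    · rintro ⟨h0, hadd⟩
      exact ⟨h 1, key h h0 hadd⟩
    · rintro ⟨y, hy⟩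
      exact ⟨by simp [hy], fun a b => by simp only [hy, add_mul]⟩
  · intro a b h
    simpa using h 1
  · intro h
    constructor
    · rintro ⟨h0, hadd⟩
      exact ⟨h 1, fun y => by rw [key h h0 hadd y]; exact mul_comm _ _⟩
    · rintro ⟨y, hy⟩
      exact ⟨by simp [hy], fun a b => by simp only [hy, mul_add]⟩
end

section
/- Let (S,≤) be a finite lattice with dual lattice (S*,≤), i.e., there is a bijection S ∋ x ↦ x* ∈ S* such that x ≤ y if and only if x* ≥ y* (x,y ∈ S). Let T denote the monoid ({0,1},∨). Then the monoid (S,∨), whose neutral element is the minimal element of S, is T-dual to (S*,∨) with duality function ψ(x,y) := 0 if x ≤ y* and ψ(x,y) := 1 otherwise (x ∈ S, y ∈ S*). -/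
theorem hom_iff_aux {L : Type*} [Lattice L] [OrderBot L] [Finite L] (h : L → Bool) :
    (h ⊥ = false ∧ ∀ a b, h (a ⊔ b) = (h a || h b)) ↔ ∃ m, ∀ x, h x = false ↔ x ≤ m := by
  constructor
  · rintro ⟨h0, h1⟩
    obtain ⟨m, hm⟩ := (Set.toFinite {x | h x = false}).exists_maximal ⟨⊥, h0⟩
    have hm0 : h m = false := hm.prop
    refine ⟨m, fun x => ⟨fun hx => ?_, fun hx => ?_⟩⟩
    · have h2 : h (x ⊔ m) = false := by rw [h1, hx, hm0]; rfl
      exact le_sup_left.trans (hm.le_of_ge h2 le_sup_right)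
    · have h2 := h1 x m
      rw [sup_eq_right.2 hx, hm0] at h2
      cases hx' : h x
      · rfl
      · simp [hx'] at h2
  · rintro ⟨m, hm⟩
    refine ⟨(hm _).2 bot_le, fun a b => ?_⟩
    rw [Bool.eq_iff_iff, ← not_iff_not]
    simp [hm]

theorem bool_eq_aux (a b : Bool) : a = b ↔ (a = false ↔ b = false) := by
  cases a <;> cases b <;> simp

/-- Let `(S,≤)` be a finite lattice with dual lattice `(S*,≤)`, i.e. there is a
bijection `d : S ≃ S*` with `x ≤ y ↔ d y ≤ d x`.  Let `T = ({0,1},∨)`, realised as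
`Bool` with `||` and neutral element `false`.  Define `ψ : S × S* → T` by
`ψ(x,y) = 0` if `x ≤ y*` (i.e. `x ≤ d⁻¹ y`) and `ψ(x,y) = 1` otherwise.  Then the
monoid `(S,∨)` (neutral element the minimal element `⊥`) is `T`-dual to `(S*,∨)` with
duality function `ψ`:
(i) the maps `ψ(·,y)` separate points of `S`;
(ii) the monoid homomorphisms `(S,∨,⊥) → (Bool,∨,false)` are exactly the `ψ(·,y)`;
(iii) the maps `ψ(x,·)` separate points of `S*`;
(iv) the monoid homomorphisms `(S*,∨,⊥) → (Bool,∨,false)` are exactly the `ψ(x,·)`. -/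
theorem lattice_duality {S S' : Type*} [Lattice S] [Lattice S']
    [OrderBot S] [OrderBot S'] [Finite S] [Finite S']
    (d : S ≃ S') (hd : ∀ x y : S, x ≤ y ↔ d y ≤ d x)
    (ψ : S → S' → Bool) (hψ : ∀ (x : S) (y : S'), ψ x y = false ↔ x ≤ d.symm y) :
    (∀ x₁ x₂ : S, (∀ y, ψ x₁ y = ψ x₂ y) → x₁ = x₂) ∧
    (∀ h : S → Bool,
      ((h ⊥ = false ∧ ∀ a b, h (a ⊔ b) = (h a || h b)) ↔ ∃ y, ∀ x, h x = ψ x y)) ∧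
    (∀ y₁ y₂ : S', (∀ x, ψ x y₁ = ψ x y₂) → y₁ = y₂) ∧
    (∀ g : S' → Bool,
      ((g ⊥ = false ∧ ∀ a b, g (a ⊔ b) = (g a || g b)) ↔ ∃ x, ∀ y, g y = ψ x y)) := by
  have hψ' : ∀ x y, ψ x y = false ↔ y ≤ d x := fun x y => by
    rw [hψ, hd, d.apply_symm_apply]
  refine ⟨fun x₁ x₂ h => ?_, fun h => ?_, fun y₁ y₂ h => ?_, fun g => ?_⟩
  · apply d.injective
    apply eq_of_forall_le_iff
    intro y
    rw [← hψ', ← hψ', h]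
  · rw [hom_iff_aux, d.symm.surjective.exists]
    exact exists_congr fun _ => forall_congr' fun _ => by
      rw [bool_eq_aux (h _) (ψ _ _), hψ]
  · apply d.symm.injective
    apply eq_of_forall_le_iff
    intro y
    rw [← hψ, ← hψ, h]
  · rw [hom_iff_aux, d.surjective.exists]
    exact exists_congr fun _ => forall_congr' fun _ => by
      rw [bool_eq_aux (g _) (ψ _ _), hψ']
end

section
/- Let Λ be a finite set and define ψ_add : {0,1}^Λ × {0,1}^Λ → {0,1} by ψ_add(x,y) := ⋁_{i∈Λ} x(i)·y(i). Then a map m : {0,1}^Λ → {0,1}^Λ has a dual map n : {0,1}^Λ → {0,1}^Λ with respect to ψ_add (i.e., ψ_add(m(x),y) = ψ_add(x,n(y)) for all x,y) if and only if m is additive, meaning m(0̲) = 0̲ and m(x∨y) = m(x)∨m(y) for all x,y ∈ {0,1}^Λ. -/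
open Finset

theorem sup_bool_iff {Λ : Type*} [Fintype Λ] (f : Λ → Bool) :
    univ.sup f = true ↔ ∃ i, f i = true := by
  constructor
  · intro h
    by_contra hc
    have h0 : univ.sup f = ⊥ := by
      rw [Finset.sup_eq_bot_iff]
      intro i _
      have : ¬ f i = true := fun hi => hc ⟨i, hi⟩
      simpa using this
    rw [h0] at h
    exact absurd h (by decide)
  · rintro ⟨i, hi⟩
    have h1 : f i ≤ univ.sup f := Finset.le_sup (mem_univ i)
    rw [hi] at h1
    exact top_le_iff.mp h1

/-- Additive duality: with `{0,1}` realised as `Bool` (`0 = false`, `1 = true`,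
`∨ = ||`, product `= &&`) and `ψ_add(x,y) := ⋁_{i∈Λ} x(i)·y(i)`, a map
`m : {0,1}^Λ → {0,1}^Λ` has a dual map `n` with respect to `ψ_add` (i.e.
`ψ_add(m(x),y) = ψ_add(x,n(y))` for all `x,y`) if and only if `m` is additive, i.e.
`m(0̲) = 0̲` and `m(x ∨ y) = m(x) ∨ m(y)`. -/
theorem additive_duality {Λ : Type*} [Fintype Λ]
    (m : (Λ → Bool) → (Λ → Bool)) :
    (∃ n : (Λ → Bool) → (Λ → Bool),
        ∀ x y : Λ → Bool,
          (univ.sup fun i => m x i && y i) = univ.sup fun i => x i && n y i) ↔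
      (m (fun _ => false) = (fun _ => false) ∧
        ∀ x y : Λ → Bool, m (fun i => x i || y i) = fun i => m x i || m y i) := by
  classical
  constructor
  · rintro ⟨n, hn⟩
    have key : ∀ x j, m x j = true ↔ ∃ i, x i = true ∧ n (fun k => decide (k = j)) i = true := by
      intro x j
      have h := hn x (fun k => decide (k = j))
      rw [Bool.eq_iff_iff, sup_bool_iff, sup_bool_iff] at h
      simpa using h
    constructor
    · funext j
      rw [Bool.eq_iff_iff, key]
      simp
    · intro x y
      funext j
      rw [Bool.eq_iff_iff, Bool.or_eq_true, key, key, key, ← exists_or]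
      simp only [Bool.or_eq_true, or_and_right]
  · rintro ⟨h0, hadd⟩
    have hs : ∀ (s : Finset Λ) (j : Λ), m (fun k => decide (k ∈ s)) j = true ↔
        ∃ i, i ∈ s ∧ m (fun k => decide (k = i)) j = true := by
      intro s j
      induction s using Finset.induction_on with
      | empty => simp [h0]
      | insert a s ha ih =>
        have e : (fun k => decide (k ∈ insert a s)) =
            fun k => (fun k => decide (k = a)) k || (fun k => decide (k ∈ s)) k := by
          funext k
          simp
        rw [e, hadd, Bool.or_eq_true, ih]
        simp
    have key : ∀ x j, m x j = true ↔ ∃ i, x i = true ∧ m (fun k => decide (k = i)) j = true := by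
      intro x j
      have h := hs (univ.filter fun i => x i = true) j
      simpa using h
    refine ⟨fun y i => univ.sup fun j => m (fun k => decide (k = i)) j && y j, ?_⟩
    intro x y
    rw [Bool.eq_iff_iff, sup_bool_iff, sup_bool_iff]
    simp only [Bool.and_eq_true, sup_bool_iff, key x]
    constructor
    · rintro ⟨j, ⟨i, hx, hm⟩, hy⟩
      exact ⟨i, hx, j, hm, hy⟩
    · rintro ⟨i, hx, j, hm, hy⟩
      exact ⟨j, ⟨i, hx, hm⟩, hy⟩
end

section
/- Let S, R, T be commutative monoids with S finite, let f : R → Hom(S,T) be a monoid isomorphism (Hom(S,T) carrying pointwise addition), and suppose S and Hom(R,T) have the same (finite) cardinality. Define ψ : S × R → T by ψ(x,y) := f(y)(x). Then S is T-dual to R with duality function ψ if and only if the map S → (R → T), x ↦ ψ(x,·), is injective, i.e., the functions ψ(x,·) for x ∈ S are pairwise distinct. -/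
/-- Let `S, R, T` be commutative monoids with `S` finite, let `f : R ≃+ Hom(S,T)` be a
monoid isomorphism (`Hom(S,T)` carrying pointwise addition), and suppose `S` and
`Hom(R,T)` have the same (finite) cardinality.  Define `ψ(x,y) := f(y)(x)`.  Then `S`
is `T`-dual to `R` with duality function `ψ` if and only if the map
`x ↦ ψ(x,·) : S → (R → T)` is injective, i.e. the functions `ψ(x,·)`, `x ∈ S`, are
pairwise distinct. -/
theorem duality_iff_injective {S R T : Type*}
    [AddCommMonoid S] [AddCommMonoid R] [AddCommMonoid T] [Finite S]
    (f : R ≃+ (S →+ T)) (hcard : Nat.card S = Nat.card (R →+ T)) :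
    IsDuality (fun (x : S) (y : R) => f y x) ↔
      Function.Injective (fun (x : S) => fun (y : R) => f y x) := by
  constructor
  · intro h x₁ x₂ hx
    exact h.1 x₁ x₂ (fun y => congrFun hx y)
  · intro hinj
    have hpos : Nat.card (R →+ T) ≠ 0 := by
      rw [← hcard]
      exact Nat.card_pos.ne'
    haveI : Finite (R →+ T) := Nat.finite_of_card_ne_zero hpos
    let ev : S → (R →+ T) := fun x =>
      { toFun := fun y => f y x
        map_zero' := by simp
        map_add' := by intro a b; simp }
    have hev : Function.Injective ev := by
      intro a b hab
      apply hinj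
      funext y
      exact DFunLike.congr_fun hab y
    have hbij : Function.Bijective ev :=
      (Nat.bijective_iff_injective_and_card ev).2 ⟨hev, hcard⟩
    refine ⟨fun x₁ x₂ h => hinj (funext h), ?_, ?_, ?_⟩
    · intro h
      constructor
      · rintro ⟨h0, ha⟩
        refine ⟨f.symm { toFun := h, map_zero' := h0, map_add' := ha }, fun x => ?_⟩
        simp
      · rintro ⟨y, hy⟩
        simp [hy]
    · intro y₁ y₂ h
      exact f.injective (DFunLike.ext _ _ h)
    · intro g
      constructor
      · rintro ⟨h0, ha⟩
        obtain ⟨x, hx⟩ := hbij.2 { toFun := g, map_zero' := h0, map_add' := ha }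
        exact ⟨x, fun y => (DFunLike.congr_fun hx y).symm⟩
      · rintro ⟨x, hx⟩
        simp [hx]
end
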